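/- Let ζ̲ > 0 and ζ̄ > 0, let g : ℝ → ℝ be convex and continuous, and let S₀ > 0. Then the single-round upper hedging value over the uncertainty set U = [−ζ̲, ζ̄] equals the expectation of the payoff under the unique risk-neutral probability measure supported on the two endpoints {−ζ̲, ζ̄}; that is, ⨅_{Δ ∈ ℝ} ⨆_{r ∈ [−ζ̲, ζ̄]} (g(S₀·(1+r)) − r·Δ) = (ζ̄·g(S₀·(1−ζ̲)) + ζ̲·g(S₀·(1+ζ̄))) / (ζ̲ + ζ̄). -/

import Mathlib

/-!
For every hedge `Δ` the inner supremum is at least the payoff at each endpoint of `[-ζd, ζu]`, hence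
at least their average under the mean-zero weights `ζu / (ζd + ζu)`, `ζd / (ζd + ζu)`; the `Δ`-terms
cancel in that average, leaving the risk-neutral value. For the slope
`Δ = (g (S₀ (1 + ζu)) - g (S₀ (1 - ζd))) / (ζd + ζu)` of the chord of `r ↦ g (S₀ (1 + r))` over the
interval, convexity puts the payoff below the chord, so the supremum is at most the value of the
chord at `r = 0`, which is the same number. Continuity of `g` on the compact interval makes all the
suprema genuine, and the lower bound makes the infimum genuine.
-/

theorem stmt_2 (ζd ζu : ℝ) (hζd : 0 < ζd) (hζu : 0 < ζu)
    (g : ℝ → ℝ) (hconv : ConvexOn ℝ Set.univ g) (hcont : Continuous g)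
    (S₀ : ℝ) (hS₀ : 0 < S₀) :
    (⨅ Δ : ℝ, ⨆ r : Set.Icc (-ζd) ζu, (g (S₀ * (1 + (r : ℝ))) - (r : ℝ) * Δ)) =
      (ζu * g (S₀ * (1 - ζd)) + ζd * g (S₀ * (1 + ζu))) / (ζd + ζu) := by
  have hs : 0 < ζd + ζu := by positivity
  have lower : ∀ Δ : ℝ, (ζu * g (S₀ * (1 - ζd)) + ζd * g (S₀ * (1 + ζu))) / (ζd + ζu) ≤
      ⨆ r : Set.Icc (-ζd) ζu, (g (S₀ * (1 + (r : ℝ))) - (r : ℝ) * Δ) := by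
    intro Δ
    have hb : BddAbove (Set.range fun r : Set.Icc (-ζd) ζu =>
        g (S₀ * (1 + (r : ℝ))) - (r : ℝ) * Δ) :=
      (isCompact_range (by fun_prop)).bddAbove
    have h1 := le_ciSup hb ⟨-ζd, le_rfl, by linarith⟩
    have h2 := le_ciSup hb ⟨ζu, by linarith, le_rfl⟩
    simp only [← sub_eq_add_neg] at h1 h2
    rw [div_le_iff₀ hs]
    -- the mean-zero combination of the two endpoint bounds, in which `Δ` cancels
    linarith [mul_le_mul_of_nonneg_left h1 hζu.le, mul_le_mul_of_nonneg_left h2 hζd.le]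
  refine le_antisymm ?_ (le_ciInf lower)
  refine (ciInf_le ⟨_, Set.forall_mem_range.2 lower⟩
    ((g (S₀ * (1 + ζu)) - g (S₀ * (1 - ζd))) / (ζd + ζu))).trans ?_
  have : Nonempty (Set.Icc (-ζd) ζu) := ⟨⟨0, by linarith, hζu.le⟩⟩
  refine ciSup_le ?_
  rintro ⟨r, hr1, hr2⟩
  -- `r` is the convex combination of `-ζd` and `ζu` with these weights
  have h := hconv.2 (Set.mem_univ (S₀ * (1 - ζd))) (Set.mem_univ (S₀ * (1 + ζu)))
    (show 0 ≤ (ζu - r) / (ζd + ζu) from div_nonneg (by linarith) hs.le)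
    (show 0 ≤ (r + ζd) / (ζd + ζu) from div_nonneg (by linarith) hs.le)
    (by field_simp; ring)
  simp only [smul_eq_mul] at h
  have e : (ζu - r) / (ζd + ζu) * (S₀ * (1 - ζd)) + (r + ζd) / (ζd + ζu) * (S₀ * (1 + ζu))
      = S₀ * (1 + r) := by
    field_simp
    ring
  rw [e] at h
  rw [sub_le_iff_le_add]
  refine h.trans (le_of_eq ?_)
  field_simp
  ring
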